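/- Let 𝒜 : ℝ^{2×2} → ℝ^{2×2} be a linear projection (𝒜∘𝒜 = 𝒜) such that the induced operator 𝔸u := 𝒜[Du] is ℂ-elliptic, and let Ω ⊂ ℝ² be open and connected. Then for u ∈ C²(Ω; ℝ²) the following are equivalent: (i) 𝒜[Du(x)] = 0 for all x ∈ Ω; (ii) there exist B ∈ ℝ^{2×2} with 𝒜[B] = 0 and b ∈ ℝ² such that u(x) = Bx + b for all x ∈ Ω. -/

import Mathlib

/-!
The kernel of a `ℂ`-elliptic `𝒜`, once complexified, contains no nonzero singular matrix, because a
singular `2 × 2` matrix has the form `v ξᵀ` (`eq_zero_of_det_eq_zero`).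

If `𝒜[Du] = 0` on `Ω`, then differentiating shows that `P = ∂₁Du` and `Q = ∂₂Du` lie in `ker 𝒜`, and
symmetry of second derivatives says that the second column of `P` is the first column of `Q`.
Over `ℂ` some nontrivial combination `s P + t Q` is singular, since its determinant is a binary
quadratic form in `(s, t)`; it therefore vanishes. By the symmetry this reads
`P (s, t)ᵀ = Q (s, t)ᵀ = 0`, so `P` and `Q` are themselves singular elements of `ker 𝒜` and vanish
(`eq_zero_of_symm`). Hence `D²u = 0`, and `u` is affine on the connected set `Ω`.
-/

/-- Partial derivative in direction `j` of a scalar function on `ℝ²`. -/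
noncomputable def pd2 (j : Fin 2) (f : (Fin 2 → ℝ) → ℝ) (x : Fin 2 → ℝ) : ℝ :=
  fderiv ℝ f x (Pi.single j 1)

/-- Jacobian matrix `(Du)_{ij} = ∂_j u_i`. -/
noncomputable def jac2 (u : (Fin 2 → ℝ) → (Fin 2 → ℝ)) (x : Fin 2 → ℝ) :
    Matrix (Fin 2) (Fin 2) ℝ :=
  Matrix.of fun i j => pd2 j (fun y => u y i) x

/-- Complexification `𝒜_ℂ(M) := 𝒜(Re M) + i 𝒜(Im M)` (entrywise real/imaginary parts). -/
noncomputable def complexify2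
    (𝒜 : Matrix (Fin 2) (Fin 2) ℝ →ₗ[ℝ] Matrix (Fin 2) (Fin 2) ℝ)
    (M : Matrix (Fin 2) (Fin 2) ℂ) : Matrix (Fin 2) (Fin 2) ℂ :=
  Matrix.of fun i j =>
    ((𝒜 (Matrix.of fun a b => (M a b).re)) i j : ℂ) +
      Complex.I * ((𝒜 (Matrix.of fun a b => (M a b).im)) i j : ℂ)

/-- ℂ-ellipticity of the operator `u ↦ 𝒜[Du]`. -/
def CElliptic2 (𝒜 : Matrix (Fin 2) (Fin 2) ℝ →ₗ[ℝ] Matrix (Fin 2) (Fin 2) ℝ) : Prop :=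
  ∀ ξ : Fin 2 → ℂ, ξ ≠ 0 →
    Function.Injective fun v : Fin 2 → ℂ =>
      complexify2 𝒜 (Matrix.of fun i j => v i * ξ j)

/-- The complexified kernel of a `ℂ`-elliptic `𝒜` contains no nonzero singular matrix. -/
lemma eq_zero_of_det_eq_zero
    {𝒜 : Matrix (Fin 2) (Fin 2) ℝ →ₗ[ℝ] Matrix (Fin 2) (Fin 2) ℝ} (hell : CElliptic2 𝒜)
    (M : Matrix (Fin 2) (Fin 2) ℂ)
    (hre : 𝒜 (Matrix.of fun a b => (M a b).re) = 0)
    (him : 𝒜 (Matrix.of fun a b => (M a b).im) = 0) (hdet : M.det = 0) : M = 0 := by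
  obtain ⟨w, hw, hMw⟩ := Matrix.exists_mulVec_eq_zero_iff.2 hdet
  have hrow : ∀ i, M i 0 * w 0 + M i 1 * w 1 = 0 := fun i => by
    simpa [Matrix.mulVec, dotProduct, Fin.sum_univ_two] using congrFun hMw i
  -- The rows of `M` annihilate `w`, so they are multiples of `ξ = (-w₁, w₀)`.
  obtain ⟨v, hv⟩ : ∃ v : Fin 2 → ℂ, M = Matrix.of fun i j => v i * (![-w 1, w 0] : Fin 2 → ℂ) j := by
    by_cases h0 : w 0 = 0
    · have h1 : w 1 ≠ 0 := fun h1 => hw (by ext i; fin_cases i <;> simp [h0, h1])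
      refine ⟨fun i => -M i 0 / w 1, ?_⟩
      ext i j
      have := hrow i
      simp only [h0, mul_zero, zero_add, mul_eq_zero, h1, or_false] at this
      fin_cases j
      · simp; field_simp
      · simp [h0, this]
    · refine ⟨fun i => M i 1 / w 0, ?_⟩
      ext i j
      have := hrow i
      fin_cases j
      · simp; field_simp; linear_combination this
      · simp; field_simp
  have hξ : (![-w 1, w 0] : Fin 2 → ℂ) ≠ 0 := by
    intro h
    apply hw
    have h0 := congrFun h 0
    have h1 := congrFun h 1
    simp at h0 h1
    ext i; fin_cases i <;> simp [h0, h1]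
  have hv0 : v = 0 := by
    apply hell _ hξ
    have h1 : complexify2 𝒜 M = 0 := by
      ext i j
      simp [complexify2, hre, him]
    have h2 : complexify2 𝒜 0 = 0 := by
      have h0 : (Matrix.of fun _ _ => (0 : ℝ)) = (0 : Matrix (Fin 2) (Fin 2) ℝ) := rfl
      ext i j
      simp [complexify2, h0]
    have h3 : (Matrix.of fun (i j : Fin 2) =>
        (0 : Fin 2 → ℂ) i * (![-w 1, w 0] : Fin 2 → ℂ) j) = 0 := by
      ext i j; simp
    change complexify2 𝒜 (Matrix.of fun i j => v i * (![-w 1, w 0] : Fin 2 → ℂ) j) =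
      complexify2 𝒜 (Matrix.of fun i j => (0 : Fin 2 → ℂ) i * (![-w 1, w 0] : Fin 2 → ℂ) j)
    rw [h3, h2, ← hv, h1]
  rw [hv, hv0]
  ext i j; simp

lemma eq_zero_of_det_eq_zero_real
    {𝒜 : Matrix (Fin 2) (Fin 2) ℝ →ₗ[ℝ] Matrix (Fin 2) (Fin 2) ℝ} (hell : CElliptic2 𝒜)
    (M : Matrix (Fin 2) (Fin 2) ℝ) (hM : 𝒜 M = 0) (hdet : M.det = 0) : M = 0 := by
  have h := eq_zero_of_det_eq_zero hell (M.map Complex.ofReal)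
    (by
      have : (Matrix.of fun a b => ((M.map Complex.ofReal) a b).re) = M := by ext; simp
      rw [this, hM])
    (by
      have : (Matrix.of fun a b => ((M.map Complex.ofReal) a b).im) = 0 := by ext; simp
      rw [this, map_zero])
    (by
      rw [Matrix.det_fin_two] at hdet ⊢
      simp only [Matrix.map_apply]
      exact_mod_cast hdet)
  ext i j
  simpa using congrFun (congrFun h i) j

/-- A binary quadratic form over `ℂ` has a nontrivial zero. -/
lemma exists_quadratic_form_zero (a b c : ℂ) :
    ∃ s t : ℂ, (s ≠ 0 ∨ t ≠ 0) ∧ a * (s * s) + b * (s * t) + c * (t * t) = 0 := by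
  by_cases ha : a = 0
  · exact ⟨1, 0, by simp, by simp [ha]⟩
  · obtain ⟨x, hx⟩ := exists_quadratic_eq_zero (a := a) (b := b) (c := c) ha
      (IsAlgClosed.exists_eq_mul_self _)
    exact ⟨x, 1, by simp, by linear_combination hx⟩

/-- Two elements of the kernel of a `ℂ`-elliptic `𝒜` with the compatibility `P e₂ = Q e₁` of
second derivatives both vanish. -/
lemma eq_zero_of_symm
    {𝒜 : Matrix (Fin 2) (Fin 2) ℝ →ₗ[ℝ] Matrix (Fin 2) (Fin 2) ℝ} (hell : CElliptic2 𝒜)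
    (P Q : Matrix (Fin 2) (Fin 2) ℝ) (hP : 𝒜 P = 0) (hQ : 𝒜 Q = 0)
    (hPQ : ∀ i, P i 1 = Q i 0) : P = 0 ∧ Q = 0 := by
  -- The coefficients are those of `det (s P + t Q)` as a form in `(s, t)`.
  obtain ⟨s, t, hst, hq⟩ := exists_quadratic_form_zero (P.det : ℂ)
    (P 0 0 * Q 1 1 + Q 0 0 * P 1 1 - P 0 1 * Q 1 0 - Q 0 1 * P 1 0) (Q.det : ℂ)
  have hM := eq_zero_of_det_eq_zero hell (Matrix.of fun i j => s * (P i j : ℂ) + t * (Q i j : ℂ))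
    (by
      have : (Matrix.of fun a b =>
          ((Matrix.of fun i j => s * (P i j : ℂ) + t * (Q i j : ℂ)) a b).re) =
          s.re • P + t.re • Q := by ext; simp
      rw [this]; simp [hP, hQ])
    (by
      have : (Matrix.of fun a b =>
          ((Matrix.of fun i j => s * (P i j : ℂ) + t * (Q i j : ℂ)) a b).im) =
          s.im • P + t.im • Q := by ext; simp
      rw [this]; simp [hP, hQ])
    (by
      rw [Matrix.det_fin_two] at hq ⊢
      rw [Matrix.det_fin_two] at hq
      push_cast at hq
      simp only [Matrix.of_apply]
      linear_combination hq)
  have hE : ∀ i j, s * (P i j : ℂ) + t * (Q i j : ℂ) = 0 := fun i j => by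
    simpa using congrFun (congrFun hM i) j
  -- Both `P` and `Q` annihilate the nonzero vector `(s, t)`.
  have key : ∀ N : Matrix (Fin 2) (Fin 2) ℝ, (∀ i, s * (N i 0 : ℂ) + t * (N i 1 : ℂ) = 0) →
      N.det = 0 := by
    intro N hN
    rw [Matrix.det_fin_two]
    have hs : s * ((N 0 0 * N 1 1 - N 0 1 * N 1 0 : ℝ) : ℂ) = 0 := by
      push_cast
      linear_combination (N 1 1 : ℂ) * hN 0 - (N 0 1 : ℂ) * hN 1
    have ht : t * ((N 0 0 * N 1 1 - N 0 1 * N 1 0 : ℝ) : ℂ) = 0 := by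
      push_cast
      linear_combination (N 0 0 : ℂ) * hN 1 - (N 1 0 : ℂ) * hN 0
    rcases hst with h | h
    · exact_mod_cast (mul_eq_zero.1 hs).resolve_left h
    · exact_mod_cast (mul_eq_zero.1 ht).resolve_left h
  exact ⟨eq_zero_of_det_eq_zero_real hell P hP (key P fun i => by rw [hPQ]; exact hE i 0),
    eq_zero_of_det_eq_zero_real hell Q hQ (key Q fun i => by rw [← hPQ]; exact hE i 1)⟩

/-- The matrix of a continuous linear endomorphism of `ℝ²`, as a linear map. -/
noncomputable def clmMatrix :
    ((Fin 2 → ℝ) →L[ℝ] (Fin 2 → ℝ)) →ₗ[ℝ] Matrix (Fin 2) (Fin 2) ℝ :=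
  LinearMap.toMatrix'.toLinearMap ∘ₗ ContinuousLinearMap.coeLM ℝ

lemma clmMatrix_apply (L : (Fin 2 → ℝ) →L[ℝ] (Fin 2 → ℝ)) (i j : Fin 2) :
    clmMatrix L i j = L (Pi.single j 1) i := by
  simp [clmMatrix, LinearMap.toMatrix'_apply]

lemma clmMatrix_mulVec (L : (Fin 2 → ℝ) →L[ℝ] (Fin 2 → ℝ)) (x : Fin 2 → ℝ) :
    (clmMatrix L).mulVec x = L x :=
  LinearMap.toMatrix'_mulVec (L : (Fin 2 → ℝ) →ₗ[ℝ] (Fin 2 → ℝ)) x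

lemma jac2_eq_clmMatrix {u : (Fin 2 → ℝ) → (Fin 2 → ℝ)} {x : Fin 2 → ℝ}
    (hu : DifferentiableAt ℝ u x) : jac2 u x = clmMatrix (fderiv ℝ u x) := by
  ext i j
  rw [clmMatrix_apply]
  simp only [jac2, pd2, Matrix.of_apply]
  rw [fderiv_apply hu i]
  rfl

/-- Characterisation of the nullspace of a ℂ-elliptic operator `𝔸 = 𝒜[D·]` induced by a
projection `𝒜` on `ℝ^{2×2}`: on an open connected `Ω`, a `C²` map `u` satisfies `𝒜[Du] = 0`
iff `u(x) = Bx + b` with `𝒜[B] = 0`. -/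
theorem stmt3
    (𝒜 : Matrix (Fin 2) (Fin 2) ℝ →ₗ[ℝ] Matrix (Fin 2) (Fin 2) ℝ)
    (hproj : ∀ M, 𝒜 (𝒜 M) = 𝒜 M)
    (hell : CElliptic2 𝒜)
    (Ω : Set (Fin 2 → ℝ)) (hΩ : IsOpen Ω) (hconn : IsConnected Ω)
    (u : (Fin 2 → ℝ) → (Fin 2 → ℝ)) (hu : ContDiffOn ℝ 2 u Ω) :
    (∀ x ∈ Ω, 𝒜 (jac2 u x) = 0) ↔
      ∃ (B : Matrix (Fin 2) (Fin 2) ℝ) (b : Fin 2 → ℝ),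
        𝒜 B = 0 ∧ ∀ x ∈ Ω, u x = B.mulVec x + b := by
  constructor
  · intro h
    have hdiff : DifferentiableOn ℝ u Ω := hu.differentiableOn (by norm_num)
    have hD : DifferentiableOn ℝ (fderiv ℝ u) Ω :=
      (hu.fderiv_of_isOpen (m := 1) hΩ (by norm_num)).differentiableOn (by norm_num)
    have hker : ∀ x ∈ Ω, 𝒜 (clmMatrix (fderiv ℝ u x)) = 0 := fun x hx => by
      rw [← jac2_eq_clmMatrix (hdiff.differentiableAt (hΩ.mem_nhds hx))]
      exact h x hx
    have hzero : Ω.EqOn (fderiv ℝ (fderiv ℝ u)) 0 := by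
      intro x hx
      have hxΩ := hΩ.mem_nhds hx
      have hsymm : IsSymmSndFDerivAt ℝ u x := (hu.contDiffAt hxΩ).isSymmSndFDerivAt (by simp)
      -- The linear constraint `𝒜[Du] = 0` is inherited by every directional derivative of `Du`.
      have hker2 : ∀ e, 𝒜 (clmMatrix (fderiv ℝ (fderiv ℝ u) x e)) = 0 := by
        intro e
        ext i j
        let φ : ((Fin 2 → ℝ) →L[ℝ] (Fin 2 → ℝ)) →L[ℝ] ℝ :=
          LinearMap.toContinuousLinearMap (Matrix.entryLinearMap ℝ ℝ i j ∘ₗ 𝒜 ∘ₗ clmMatrix)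
        have h1 : HasFDerivAt (fun y => φ (fderiv ℝ u y)) (φ.comp (fderiv ℝ (fderiv ℝ u) x)) x :=
          φ.hasFDerivAt.comp x (hD.differentiableAt hxΩ).hasFDerivAt
        have h2 : HasFDerivAt (fun y => φ (fderiv ℝ u y))
            (0 : (Fin 2 → ℝ) →L[ℝ] ℝ) x := by
          refine (hasFDerivAt_const (0 : ℝ) x).congr_of_eventuallyEq ?_
          filter_upwards [hxΩ] with y hy
          simp [φ, hker y hy]
        have h3 := DFunLike.congr_fun (h1.unique h2) e
        simpa [φ] using h3
      obtain ⟨hP, hQ⟩ := eq_zero_of_symm hell _ _ (hker2 (Pi.single 0 1)) (hker2 (Pi.single 1 1))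
        (fun i => by
          rw [clmMatrix_apply, clmMatrix_apply]
          exact congrFun (hsymm.eq (Pi.single 0 1) (Pi.single 1 1)) i)
      have hinj : ∀ L, clmMatrix L = 0 → L = 0 := fun L hL => by
        ext1 y
        rw [← clmMatrix_mulVec, hL]; simp
      change fderiv ℝ (fderiv ℝ u) x = 0
      ext1 y
      have hy : y = y 0 • Pi.single 0 1 + y 1 • Pi.single 1 1 := by
        ext i; fin_cases i <;> simp
      rw [hy, map_add, map_smul, map_smul, hinj _ hP, hinj _ hQ]
      simp
    obtain ⟨L, hL⟩ := hΩ.exists_is_const_of_fderiv_eq_zero hconn.isPreconnected hD hzero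
    obtain ⟨b, hb⟩ := hΩ.exists_eq_add_of_fderiv_eq hconn.isPreconnected hdiff
      (g := L) L.differentiable.differentiableOn
      (fun x hx => by rw [hL x hx, L.fderiv])
    obtain ⟨x₀, hx₀⟩ := hconn.nonempty
    refine ⟨clmMatrix L, b, ?_, fun x hx => ?_⟩
    · rw [← hL x₀ hx₀]; exact hker x₀ hx₀
    · rw [clmMatrix_mulVec]; exact hb hx
  · rintro ⟨B, b, hB, hub⟩ x hx
    let L : (Fin 2 → ℝ) →L[ℝ] (Fin 2 → ℝ) := LinearMap.toContinuousLinearMap (Matrix.toLin' B)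
    have hd : HasFDerivAt u L x := by
      refine (L.hasFDerivAt.add_const b).congr_of_eventuallyEq ?_
      filter_upwards [hΩ.mem_nhds hx] with y hy
      simp [L, hub y hy]
    have hLB : clmMatrix L = B := by
      ext i j
      simp [clmMatrix_apply, L]
    rw [jac2_eq_clmMatrix hd.differentiableAt, hd.fderiv, hLB, hB]
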